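/- Let 2 | λ and let a_{s,t}^γ be the multivariable functions from Theorem 1 and (a,b) the GCP-generating functions on Z_2^m from the Paterson lemma. For fixed s_1, s_2, t_1, t_2 with t_1 ≠ t_2, define for each d ∈ Z_2^m and γ ∈ ∏_α Z_{p_α} the function F_d^{γ,s_1,s_2,t_1,t_2} = (1−v'')·(a_{s_1,t_1}^γ + a(d)) + v''·(a_{s_2,t_2}^γ + b(d)) on ∏_α Z_{p_α}^{m_α−1} × ∏_α Z_{p_α} × Z_2, and let X^γ be the associated complex array of size 2^m × (2∏_α p_α^{m_α}), with row d ∈ Z_2^m given by ω_λ^{F_d^γ(·)}. Then {X^γ : γ ∈ ∏_α Z_{p_α}} is a 2-D ZCAC: Σ_γ A(X^γ)(τ_1,τ_2) = 2^{m+1}·∏_α p_α^{m_α+1} at (τ_1,τ_2)=(0,0), and = 0 for all (τ_1,τ_2) ≠ (0,0) with |τ_1| < 2^m and |τ_2| < ∏_α p_α^{m_α−1}. -/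

import Mathlib

/-!
Write `N = ∏ p_α^(m_α-1)`, `Q = ∏ p_α` and `ψ` for the standard additive character of `ZMod λ`.
The columns of `X^γ` split into `2 * Q` segments of length `N`. On the segment `J` the exponent is the
sum of a row part (`aBool` for `J < Q`, `bBool` for `J ≥ Q`), a part depending on `J` only, and
`RFun γ t` at the position inside the segment, with `t = t1` or `t = t2` (`FFun_segment`). Hence the
summed autocorrelation is a combination, over pairs of segments `(J, J')`, of the sums
`∑_γ ∑_{r' = r + δ} ψ(RFun γ t r - RFun γ t' r')` with `δ = τ2 - (J' - J) N`.

These sums vanish for every `δ ≠ 0` and all `t, t'` (`sum_ccf_eq_zero`). If `r` and `r'` differ in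
the first digit of some path `π_α`, already the sum over `γ_α` is zero. Otherwise the digits agree
along some path up to a position `l` and differ at `l + 1`; incrementing the digit at `l` cyclically
in both `r` and `r'` keeps `r' - r` and multiplies the phase by a nontrivial `p_α`-th root of unity,
because only the quadratic term joining `l` to `l + 1` notices (`blk_step`). A sum which is
multiplied by nontrivial factors under a permutation of its index set is zero
(`sum_eq_zero_of_twist`).

In the zone `|τ2| < N` the shift `δ` vanishes only for `τ2 = 0` and `J = J'`. What remains is `Q N`
times `Q` times the sum of the autocorrelations of `ψ ∘ aBool` and `ψ ∘ bBool` at `τ1`. These two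
form a Golay pair (`golay`): this is the same vanishing statement for a single block of binary
digits, the two values of `γ` giving the two members of the pair.
-/


open Finset

/-- Aperiodic cross-correlation function (ACCF) of two length-`L` complex sequences. -/
noncomputable def accf (L : ℕ) (a b : ℕ → ℂ) (τ : ℤ) : ℂ :=
  if 0 ≤ τ ∧ τ < (L : ℤ) then
    ∑ i ∈ range (L - τ.toNat), a i * (starRingEnd ℂ) (b (i + τ.toNat))
  else if -(L : ℤ) < τ ∧ τ ≤ -1 then
    ∑ i ∈ range (L - (-τ).toNat), a (i + (-τ).toNat) * (starRingEnd ℂ) (b i)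
  else 0

/-- The `β`-th base-`p α` digit of the `α`-th mixed-radix block of `j`, where the
`α`-th block has size `p α ^ (m α - 1)` and earlier blocks vary faster. This realizes
the lexicographic enumeration of `∏_α Z_{p_α}^{m_α-1}`: `dig p m j α β = v_{p_α,β+1}`. -/
def dig {k : ℕ} (p m : Fin k → ℕ) (j : ℕ) (α : Fin k) (β : ℕ) : ℕ :=
  (j / ∏ α' ∈ Finset.univ.filter (fun α' => α' < α), p α' ^ (m α' - 1)) %
      (p α ^ (m α - 1)) / p α ^ β % p α

/-- The `α`-th coordinate of `j` in the mixed-radix enumeration of `∏_α Z_{p_α}`. -/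
def odig {k : ℕ} (p : Fin k → ℕ) (j : ℕ) (α : Fin k) : ℕ :=
  (j / ∏ α' ∈ Finset.univ.filter (fun α' => α' < α), p α') % p α

/-- The multivariable function `f = f_1 + ⋯ + f_k`, where
`f_α = (λ/p_α)·Σ_β v_{π_α(β)} v_{π_α(β+1)} + Σ_β c_{α,β} v_β + c_α`
(indices `0`-based, `π α` a bijection of `{0,…,m_α-2}`). -/
def fFun {k : ℕ} (p m : Fin k → ℕ) (lam : ℕ) (π : Fin k → ℕ → ℕ)
    (c : Fin k → ℕ → ZMod lam) (c' : Fin k → ZMod lam) (j : ℕ) : ZMod lam :=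
  ∑ α, (((lam / p α : ℕ) : ZMod lam) *
        ∑ β ∈ range (m α - 2),
          (dig p m j α (π α β) : ZMod lam) * (dig p m j α (π α (β + 1)) : ZMod lam)
      + ∑ β ∈ range (m α - 1), c α β * (dig p m j α β : ZMod lam) + c' α)

/-- The function `R_t^γ = f + Σ_α (λ/p_α) v_{π_α(1)} γ_α + Σ_α (λ/p_α) v_{π_α(m_α-1)} t_α`. -/
def RFun {k : ℕ} (p m : Fin k → ℕ) (lam : ℕ) (π : Fin k → ℕ → ℕ)
    (c : Fin k → ℕ → ZMod lam) (c' : Fin k → ZMod lam)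
    (γ t : ∀ α, Fin (p α)) (j : ℕ) : ZMod lam :=
  fFun p m lam π c c' j
    + ∑ α, ((lam / p α : ℕ) : ZMod lam) * (dig p m j α (π α 0) : ZMod lam) * ((γ α : ℕ) : ZMod lam)
    + ∑ α, ((lam / p α : ℕ) : ZMod lam) * (dig p m j α (π α (m α - 2)) : ZMod lam) *
        ((t α : ℕ) : ZMod lam)

/-- The function `a_{s,t}^γ = R_t^γ + T_s` on `∏_α Z_{p_α}^{m_α-1} × ∏_α Z_{p_α}`,
with the `∏_α Z_{p_α}` coordinates varying slowest (outer index). -/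
def aFun {k : ℕ} (p m : Fin k → ℕ) (lam : ℕ) (π : Fin k → ℕ → ℕ)
    (c : Fin k → ℕ → ZMod lam) (c' : Fin k → ZMod lam)
    (s t γ : ∀ α, Fin (p α)) (j : ℕ) : ZMod lam :=
  RFun p m lam π c c' γ t (j % ∏ α, p α ^ (m α - 1))
    + ∑ α, ((lam / p α : ℕ) : ZMod lam) *
        (odig p (j / ∏ α', p α' ^ (m α' - 1)) α : ZMod lam) * ((s α : ℕ) : ZMod lam)

/-- The complex sequence `ψ(g) = ω_λ^{g(·)}` associated to a `ZMod λ`-valued function. -/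
noncomputable def seqC (lam : ℕ) (g : ℕ → ZMod lam) : ℕ → ℂ :=
  fun j => Complex.exp (2 * Real.pi * Complex.I * ((g j).val : ℂ) / (lam : ℂ))

/-- 2-D aperiodic cross-correlation of `L1 × L2` complex arrays at shift `(τ1, τ2)`. -/
noncomputable def accf2 (L1 L2 : ℕ) (X Y : ℕ → ℕ → ℂ) (τ1 τ2 : ℤ) : ℂ :=
  if 0 ≤ τ1 then
    if 0 ≤ τ2 then
      ∑ i ∈ range (L1 - τ1.toNat), ∑ j ∈ range (L2 - τ2.toNat),
        X i j * (starRingEnd ℂ) (Y (i + τ1.toNat) (j + τ2.toNat))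
    else
      ∑ i ∈ range (L1 - τ1.toNat), ∑ j ∈ range (L2 - (-τ2).toNat),
        X i (j + (-τ2).toNat) * (starRingEnd ℂ) (Y (i + τ1.toNat) j)
  else
    if 0 ≤ τ2 then
      ∑ i ∈ range (L1 - (-τ1).toNat), ∑ j ∈ range (L2 - τ2.toNat),
        X (i + (-τ1).toNat) j * (starRingEnd ℂ) (Y i (j + τ2.toNat))
    else
      ∑ i ∈ range (L1 - (-τ1).toNat), ∑ j ∈ range (L2 - (-τ2).toNat),
        X (i + (-τ1).toNat) (j + (-τ2).toNat) * (starRingEnd ℂ) (Y i j)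

/-- The `γ`-th binary digit of `i`. -/
def bit (i γ : ℕ) : ℕ := i / 2 ^ γ % 2

/-- The Boolean-function part `a(x) = (λ/2)Σ x_{π(β)}x_{π(β+1)} + Σ g_β x_β + e`
evaluated on the binary digits of `i`. -/
def aBool (lam mB : ℕ) (πB : ℕ → ℕ) (g : ℕ → ZMod lam) (e : ZMod lam) (i : ℕ) : ZMod lam :=
  ((lam / 2 : ℕ) : ZMod lam) *
      ∑ β ∈ range (mB - 1), (bit i (πB β) : ZMod lam) * (bit i (πB (β + 1)) : ZMod lam)
    + ∑ β ∈ range mB, g β * (bit i β : ZMod lam) + e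

/-- The Golay mate `b(x) = a(x) + (λ/2)x_{π(1)} + (e' − e)`. -/
def bBool (lam mB : ℕ) (πB : ℕ → ℕ) (g : ℕ → ZMod lam) (e' : ZMod lam) (i : ℕ) : ZMod lam :=
  aBool lam mB πB g e' i + ((lam / 2 : ℕ) : ZMod lam) * (bit i (πB 0) : ZMod lam)

/-- The function `F_d^{γ,s1,s2,t1,t2} = (1−v'')(a_{s1,t1}^γ + a(d)) + v''(a_{s2,t2}^γ + b(d))`,
giving the `(i,j)` entry of the `ZMod λ`-valued array (row `i ↔ d`, column
`j < 2∏_α p_α^{m_α}` with the `Z_2` coordinate `v'' = j / ∏_α p_α^{m_α}` outermost). -/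
def FFun {k : ℕ} (p m : Fin k → ℕ) (lam : ℕ) (π : Fin k → ℕ → ℕ)
    (c : Fin k → ℕ → ZMod lam) (c' : Fin k → ZMod lam)
    (mB : ℕ) (πB : ℕ → ℕ) (g : ℕ → ZMod lam) (e e' : ZMod lam)
    (s1 s2 t1 t2 γ : ∀ α, Fin (p α)) (i j : ℕ) : ZMod lam :=
  (1 - ((j / ∏ α, p α ^ (m α) : ℕ) : ZMod lam)) *
      (aFun p m lam π c c' s1 t1 γ (j % ∏ α, p α ^ (m α)) + aBool lam mB πB g e i)
    + ((j / ∏ α, p α ^ (m α) : ℕ) : ZMod lam) *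
      (aFun p m lam π c c' s2 t2 γ (j % ∏ α, p α ^ (m α)) + bBool lam mB πB g e' i)

/-- The complex array `X^γ = Ψ(K^γ)` of size `2^{mB} × 2∏_α p_α^{m_α}`. -/
noncomputable def XArr {k : ℕ} (p m : Fin k → ℕ) (lam : ℕ) (π : Fin k → ℕ → ℕ)
    (c : Fin k → ℕ → ZMod lam) (c' : Fin k → ZMod lam)
    (mB : ℕ) (πB : ℕ → ℕ) (g : ℕ → ZMod lam) (e e' : ZMod lam)
    (s1 s2 t1 t2 γ : ∀ α, Fin (p α)) : ℕ → ℕ → ℂ :=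
  fun i j => Complex.exp (2 * Real.pi * Complex.I *
    (((FFun p m lam π c c' mB πB g e e' s1 s2 t1 t2 γ i j).val : ℕ) : ℂ) / (lam : ℂ))


/-! ### Mixed-radix digits -/

theorem prod_castLE_eq_filter {k : ℕ} (n : Fin k → ℕ) (α : Fin k) :
    ∏ j : Fin (α : ℕ), n (Fin.castLE α.is_lt.le j)
      = ∏ α' ∈ Finset.univ.filter (fun α' => α' < α), n α' := by
  refine Finset.prod_bij (fun j _ => Fin.castLE α.is_lt.le j) ?_ ?_ ?_ ?_
  · intro j _
    simp only [Finset.mem_filter, Finset.mem_univ, true_and]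
    exact j.is_lt
  · intro a _ b _ h
    simpa using h
  · intro b hb
    simp only [Finset.mem_filter, Finset.mem_univ, true_and] at hb
    exact ⟨⟨b, hb⟩, Finset.mem_univ _, rfl⟩
  · intros; rfl

/-- Digit vectors correspond to the integers below `∏ α, p α ^ (m α - 1)`. -/
def digEquiv {k : ℕ} (p m : Fin k → ℕ) :
    (∀ α, Fin (m α - 1) → Fin (p α)) ≃ Fin (∏ α, p α ^ (m α - 1)) :=
  (Equiv.piCongrRight fun _ => finFunctionFinEquiv).trans finPiFinEquiv

theorem dig_digEquiv {k : ℕ} (p m : Fin k → ℕ) (x : ∀ α, Fin (m α - 1) → Fin (p α))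
    (α : Fin k) (β : ℕ) (hβ : β < m α - 1) :
    dig p m (digEquiv p m x) α β = x α ⟨β, hβ⟩ := by
  obtain ⟨r, rfl⟩ := (digEquiv p m).symm.surjective x
  rw [Equiv.apply_symm_apply]
  simp only [digEquiv, Equiv.symm_trans_apply, Equiv.piCongrRight_symm_apply, Pi.map_apply]
  rw [finFunctionFinEquiv_symm_apply_val]
  unfold dig
  rw [← prod_castLE_eq_filter]
  rfl

/-- The mixed-radix expansion of `r`, with the weights that `dig` inverts. -/
theorem sum_dig {k : ℕ} (p m : Fin k → ℕ) {r : ℕ} (hr : r < ∏ α, p α ^ (m α - 1)) :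
    r = ∑ α, (∑ β : Fin (m α - 1), dig p m r α β * p α ^ (β : ℕ)) *
      ∏ α' ∈ Finset.univ.filter (fun α' => α' < α), p α' ^ (m α' - 1) := by
  obtain ⟨x, hx⟩ := (digEquiv p m).surjective ⟨r, hr⟩
  have hx' : ((digEquiv p m x : Fin _) : ℕ) = r := by rw [hx]
  conv_lhs => rw [← hx']
  simp only [← hx', dig_digEquiv p m x _ _ (Fin.is_lt _)]
  simp only [digEquiv, Equiv.trans_apply]
  rw [finPiFinEquiv_apply]
  refine Finset.sum_congr rfl fun α _ => ?_
  rw [prod_castLE_eq_filter (fun α' => p α' ^ (m α' - 1))]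
  simp

theorem dig_lt {k : ℕ} {p m : Fin k → ℕ} (hp : ∀ α, 0 < p α) (r : ℕ) (α : Fin k) (β : ℕ) :
    dig p m r α β < p α := Nat.mod_lt _ (hp α)

theorem dig_ext {k : ℕ} {p m : Fin k → ℕ} {r r' : ℕ} (hr : r < ∏ α, p α ^ (m α - 1))
    (hr' : r' < ∏ α, p α ^ (m α - 1))
    (h : ∀ α β, β < m α - 1 → dig p m r α β = dig p m r' α β) : r = r' := by
  rw [sum_dig p m hr, sum_dig p m hr']
  refine Finset.sum_congr rfl fun α _ => ?_
  congr 1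
  exact Finset.sum_congr rfl fun β _ => by rw [h α β β.is_lt]

/-- Integer shifts are detected digitwise: if the digits of `y, y'` differ by as much as those of
`r, r'`, then `y' - y = r' - r`. -/
theorem sub_eq_of_dig {k : ℕ} {p m : Fin k → ℕ} {r r' y y' : ℕ}
    (hr : r < ∏ α, p α ^ (m α - 1)) (hr' : r' < ∏ α, p α ^ (m α - 1))
    (hy : y < ∏ α, p α ^ (m α - 1)) (hy' : y' < ∏ α, p α ^ (m α - 1))
    (h : ∀ α β, β < m α - 1 → (dig p m y' α β : ℤ) - dig p m y α β
      = (dig p m r' α β : ℤ) - dig p m r α β) : (y' : ℤ) - y = (r' : ℤ) - r := by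
  rw [sum_dig p m hr, sum_dig p m hr', sum_dig p m hy, sum_dig p m hy']
  push_cast
  rw [← Finset.sum_sub_distrib, ← Finset.sum_sub_distrib]
  refine Finset.sum_congr rfl fun α _ => ?_
  rw [← sub_mul, ← sub_mul, ← Finset.sum_sub_distrib, ← Finset.sum_sub_distrib]
  congr 1
  refine Finset.sum_congr rfl fun β _ => ?_
  rw [← sub_mul, ← sub_mul, h α β β.is_lt]

/-- The cyclic increment of a single digit. -/
theorem exists_shift {k : ℕ} (p m : Fin k → ℕ) (hp : ∀ α, 0 < p α) (α : Fin k) (b : ℕ) :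
    ∃ σ : ℕ → ℕ, ∀ r, σ r < ∏ α, p α ^ (m α - 1) ∧
      ∀ α' β, β < m α' - 1 → dig p m (σ r) α' β =
        if α' = α ∧ β = b then (dig p m r α b + 1) % p α else dig p m r α' β := by
  have key : ∀ r, ∃ y, y < ∏ α, p α ^ (m α - 1) ∧
      ∀ α' β, β < m α' - 1 → dig p m y α' β =
        if α' = α ∧ β = b then (dig p m r α b + 1) % p α else dig p m r α' β := by
    intro r
    refine ⟨digEquiv p m (fun α' β => ⟨if α' = α ∧ (β : ℕ) = b then (dig p m r α b + 1) % p α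
      else dig p m r α' β, ?_⟩), Fin.is_lt _, ?_⟩
    · split_ifs with h
      · rw [h.1]; exact Nat.mod_lt _ (hp α)
      · exact dig_lt hp r α' β
    · intro α' β hβ
      rw [dig_digEquiv p m _ _ _ hβ]
  choose σ hσ using key
  exact ⟨σ, hσ⟩

/-! ### Cancellation by a root of unity -/

/-- If a permutation `σ` of `D` multiplies `F` by a `σ`-invariant factor `ζ` which is never `1`, then
`F` sums to zero: `F = G - G ∘ σ` with `G = F / (1 - ζ)`. -/
theorem sum_eq_zero_of_twist {ι : Type*} (D : Finset ι) (F ζ : ι → ℂ) (σ : ι → ι)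
    (hmap : ∀ z ∈ D, σ z ∈ D) (hinj : Set.InjOn σ D)
    (hζ : ∀ z ∈ D, ζ (σ z) = ζ z) (hζ1 : ∀ z ∈ D, ζ z ≠ 1)
    (hF : ∀ z ∈ D, F (σ z) = ζ z * F z) : ∑ z ∈ D, F z = 0 := by
  have hsurj : Set.SurjOn σ D D :=
    Finset.surjOn_of_injOn_of_card_le σ hmap hinj le_rfl
  have h1 : ∑ z ∈ D, F (σ z) / (1 - ζ (σ z)) = ∑ z ∈ D, F z / (1 - ζ z) :=
    Finset.sum_nbij σ hmap hinj hsurj fun _ _ => rfl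
  have h2 : ∀ z ∈ D, F z = F z / (1 - ζ z) - F (σ z) / (1 - ζ (σ z)) := by
    intro z hz
    have : 1 - ζ z ≠ 0 := sub_ne_zero.2 (hζ1 z hz).symm
    rw [hζ z hz, hF z hz]
    field_simp
  rw [Finset.sum_congr rfl h2, Finset.sum_sub_distrib, h1, sub_self]

/-- Multiplication by `λ/q` only sees residues modulo `q`, so a digit may wrap around. -/
theorem step_mul_mod {lam q : ℕ} (hq : q ∣ lam) (a : ℕ) :
    ((lam / q : ℕ) : ZMod lam) * ((a % q : ℕ) : ZMod lam)
      = ((lam / q : ℕ) : ZMod lam) * (a : ZMod lam) := by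
  conv_rhs => rw [← Nat.mod_add_div a q]
  push_cast
  rw [mul_add, ← mul_assoc _ (q : ZMod lam)]
  have : ((lam / q : ℕ) : ZMod lam) * (q : ZMod lam) = 0 := by
    rw [← Nat.cast_mul, Nat.div_mul_cancel hq, ZMod.natCast_self]
  rw [this]; ring

theorem char_step_ne_one {lam q : ℕ} [NeZero lam] (hq : q ∣ lam) {d d' : ℕ} (hd : d < q)
    (hd' : d' < q) (h : d ≠ d') :
    ZMod.stdAddChar (((lam / q : ℕ) : ZMod lam) * ((d : ZMod lam) - (d' : ZMod lam))) ≠ 1 := by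
  intro h1
  rw [← AddChar.map_zero_eq_one (ZMod.stdAddChar (N := lam))] at h1
  have h2 := ZMod.injective_stdAddChar h1
  rw [mul_sub, sub_eq_zero, ← Nat.cast_mul, ← Nat.cast_mul, ZMod.natCast_eq_natCast_iff'] at h2
  have hl : 0 < lam := Nat.pos_of_ne_zero (NeZero.ne lam)
  have hdl : 0 < lam / q := Nat.div_pos (Nat.le_of_dvd hl hq) (by omega)
  have hlt : ∀ a < q, lam / q * a < lam := fun a ha => by
    calc lam / q * a < lam / q * q := Nat.mul_lt_mul_of_pos_left ha hdl
      _ = lam := Nat.div_mul_cancel hq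
  rw [Nat.mod_eq_of_lt (hlt d hd), Nat.mod_eq_of_lt (hlt d' hd')] at h2
  exact h (Nat.eq_of_mul_eq_mul_left hdl h2)

/-! ### Effect of incrementing a digit or a parameter -/

/-- The part of `RFun` carried by one block: `x` is the digit vector of the block, `A` stands for
`λ/p`. -/
def blk {lam : ℕ} (A : ZMod lam) (M : ℕ) (π : ℕ → ℕ) (c x : ℕ → ZMod lam) (t γ : ZMod lam) :
    ZMod lam :=
  A * ∑ β ∈ range (M - 2), x (π β) * x (π (β + 1)) + ∑ β ∈ range (M - 1), c β * x β
    + A * x (π 0) * γ + A * x (π (M - 2)) * t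

theorem blk_congr {lam : ℕ} {A : ZMod lam} {M : ℕ} (hM : 2 ≤ M) {π : ℕ → ℕ}
    (hπ : Set.BijOn π (Set.Iio (M - 1)) (Set.Iio (M - 1)))
    {c x y : ℕ → ZMod lam} {t γ : ZMod lam} (h : ∀ β < M - 1, x β = y β) :
    blk A M π c x t γ = blk A M π c y t γ := by
  have hπ' : ∀ j, j < M - 1 → x (π j) = y (π j) := fun j hj => h _ (hπ.mapsTo hj)
  have h1 : ∑ β ∈ range (M - 2), x (π β) * x (π (β + 1))
      = ∑ β ∈ range (M - 2), y (π β) * y (π (β + 1)) :=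
    Finset.sum_congr rfl fun β hβ => by
      rw [Finset.mem_range] at hβ
      rw [hπ' β (by omega), hπ' (β + 1) (by omega)]
  have h2 : ∑ β ∈ range (M - 1), c β * x β = ∑ β ∈ range (M - 1), c β * y β :=
    Finset.sum_congr rfl fun β hβ => by rw [h β (Finset.mem_range.1 hβ)]
  unfold blk
  rw [h1, h2, hπ' 0 (by omega), hπ' (M - 2) (by omega)]

/-- Suppose `x, x'` agree along the path `π` up to position `l`, and `y, y'` arise from them by
incrementing the digit at `π l`, where a wrap-around is allowed if `A` annihilates it. Then the
difference of the values of `blk` changes by `A` times the difference of the next digits on the path. -/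
theorem blk_step {lam : ℕ} (A : ZMod lam) (M : ℕ) (π : ℕ → ℕ)
    (hπ : Set.BijOn π (Set.Iio (M - 1)) (Set.Iio (M - 1)))
    (c x x' y y' : ℕ → ZMod lam) (t t' γ : ZMod lam) (l : ℕ) (hl : l + 1 < M - 1)
    (hx : ∀ j ≤ l, x (π j) = x' (π j))
    (hy : ∀ β < M - 1, β ≠ π l → y β = x β) (hy' : ∀ β < M - 1, β ≠ π l → y' β = x' β)
    (hyl : y (π l) = y' (π l)) (hA : A * y (π l) = A * (x (π l) + 1)) :
    blk A M π c y t γ - blk A M π c y' t' γ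
      = blk A M π c x t γ - blk A M π c x' t' γ + A * (x (π (l + 1)) - x' (π (l + 1))) := by
  have hlt : ∀ j, j < M - 1 → π j < M - 1 := fun j hj => hπ.mapsTo hj
  have hne : ∀ j, j < M - 1 → j ≠ l → π j ≠ π l := fun j hj hjl h =>
    hjl (hπ.injOn hj (Set.mem_Iio.2 (by omega)) h)
  have hyj : ∀ j, j < M - 1 → j ≠ l → y (π j) = x (π j) := fun j hj hjl =>
    hy _ (hlt j hj) (hne j hj hjl)
  have hyj' : ∀ j, j < M - 1 → j ≠ l → y' (π j) = x' (π j) := fun j hj hjl =>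
    hy' _ (hlt j hj) (hne j hj hjl)
  have hyle : ∀ j ≤ l, y (π j) = y' (π j) := by
    intro j hj
    by_cases h : j = l
    · rw [h, hyl]
    · rw [hyj j (by omega) h, hyj' j (by omega) h, hx j hj]
  -- only the edge joining the positions `l` and `l + 1` of the path feels the increment
  have hquad : A * ∑ β ∈ range (M - 2), y (π β) * y (π (β + 1))
        - A * ∑ β ∈ range (M - 2), y' (π β) * y' (π (β + 1))
      = A * ∑ β ∈ range (M - 2), x (π β) * x (π (β + 1))
        - A * ∑ β ∈ range (M - 2), x' (π β) * x' (π (β + 1))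
        + A * (x (π (l + 1)) - x' (π (l + 1))) := by
    rw [← sub_eq_iff_eq_add', ← mul_sub, ← mul_sub, ← mul_sub, ← Finset.sum_sub_distrib,
      ← Finset.sum_sub_distrib, ← Finset.sum_sub_distrib, Finset.mul_sum]
    rw [Finset.sum_eq_single_of_mem l (by rw [Finset.mem_range]; omega)]
    · rw [← hyl, ← hx l le_rfl, hyj (l + 1) hl (by omega), hyj' (l + 1) hl (by omega)]
      linear_combination (x (π (l + 1)) - x' (π (l + 1))) * hA
    · intro β hβ hβl
      rw [Finset.mem_range] at hβ
      rcases lt_or_gt_of_ne hβl with h | h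
      · rw [hyle β (by omega), hyle (β + 1) (by omega), hx β (by omega), hx (β + 1) (by omega)]
        ring
      · rw [hyj β (by omega) hβl, hyj' β (by omega) hβl, hyj (β + 1) (by omega) (by omega),
          hyj' (β + 1) (by omega) (by omega)]
        ring
  have hlin : ∑ β ∈ range (M - 1), c β * y β - ∑ β ∈ range (M - 1), c β * y' β
      = ∑ β ∈ range (M - 1), c β * x β - ∑ β ∈ range (M - 1), c β * x' β := by
    rw [← Finset.sum_sub_distrib, ← Finset.sum_sub_distrib]
    refine Finset.sum_congr rfl fun β hβ => ?_
    rw [Finset.mem_range] at hβ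
    by_cases h : β = π l
    · rw [h, hyl, hx l le_rfl]; ring
    · rw [hy β hβ h, hy' β hβ h]
  unfold blk
  rw [hyj (M - 2) (by omega) (by omega), hyj' (M - 2) (by omega) (by omega),
    hyle 0 (Nat.zero_le _), hx 0 (Nat.zero_le _)]
  linear_combination hquad + hlin

theorem RFun_eq_sum_blk {k : ℕ} (p m : Fin k → ℕ) (lam : ℕ) (π : Fin k → ℕ → ℕ)
    (c : Fin k → ℕ → ZMod lam) (c' : Fin k → ZMod lam) (γ t : ∀ α, Fin (p α)) (j : ℕ) :
    RFun p m lam π c c' γ t j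
      = ∑ α, (blk ((lam / p α : ℕ) : ZMod lam) (m α) (π α) (c α)
          (fun β => (dig p m j α β : ZMod lam)) ((t α : ℕ) : ZMod lam) ((γ α : ℕ) : ZMod lam)
          + c' α) := by
  unfold RFun fFun blk
  rw [← Finset.sum_add_distrib, ← Finset.sum_add_distrib]
  refine Finset.sum_congr rfl fun α _ => ?_
  ring

/-- Incrementing `γ α` modulo `p α` adds `(λ/p_α)·v_{π_α(1)}` to `RFun`. -/
theorem RFun_update {k : ℕ} (p m : Fin k → ℕ) (lam : ℕ) (hdvd : ∀ α, p α ∣ lam)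
    (π : Fin k → ℕ → ℕ)
    (c : Fin k → ℕ → ZMod lam) (c' : Fin k → ZMod lam) (γ t : ∀ α, Fin (p α)) (j : ℕ)
    (α : Fin k) (hα : ((γ α : ℕ) + 1) % p α < p α) :
    RFun p m lam π c c' (Function.update γ α ⟨((γ α : ℕ) + 1) % p α, hα⟩) t j
      = RFun p m lam π c c' γ t j
        + ((lam / p α : ℕ) : ZMod lam) * (dig p m j α (π α 0) : ZMod lam) := by
  rw [RFun_eq_sum_blk, RFun_eq_sum_blk, ← sub_eq_iff_eq_add', ← Finset.sum_sub_distrib,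
    Finset.sum_eq_single α]
  · rw [Function.update_self]
    unfold blk
    linear_combination (dig p m j α (π α 0) : ZMod lam) * step_mul_mod (hdvd α) ((γ α : ℕ) + 1)
      + ((lam / p α : ℕ) : ZMod lam) * (dig p m j α (π α 0) : ZMod lam) *
        (Nat.cast_succ (γ α : ℕ) : (((γ α : ℕ) + 1 : ℕ) : ZMod lam) = _)
  · intro α' _ h
    rw [Function.update_of_ne h, sub_self]
  · simp

/-- A pair `(r, r')` whose members differ in the first digit of some path contributes nothing after
summation over `γ`. -/
theorem sum_gamma_eq_zero {k : ℕ} (p m : Fin k → ℕ) (hp : ∀ α, 0 < p α)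
    (lam : ℕ) [NeZero lam] (hdvd : ∀ α, p α ∣ lam) (π : Fin k → ℕ → ℕ)
    (c : Fin k → ℕ → ZMod lam) (c' : Fin k → ZMod lam) (t t' : ∀ α, Fin (p α)) (r r' : ℕ)
    (α : Fin k) (hne : dig p m r α (π α 0) ≠ dig p m r' α (π α 0)) :
    ∑ γ : ∀ α, Fin (p α),
      ZMod.stdAddChar (RFun p m lam π c c' γ t r - RFun p m lam π c c' γ t' r') = 0 := by
  refine sum_eq_zero_of_twist _ _ (fun _ => ZMod.stdAddChar (((lam / p α : ℕ) : ZMod lam) *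
    ((dig p m r α (π α 0) : ZMod lam) - (dig p m r' α (π α 0) : ZMod lam))))
    (fun γ => Function.update γ α ⟨((γ α : ℕ) + 1) % p α, Nat.mod_lt _ (hp α)⟩) ?_ ?_ ?_ ?_ ?_
  · simp
  · intro γ _ γ' _ h
    funext α'
    by_cases hα : α' = α
    · subst hα
      have h1 := congrFun h α'
      simp only [Function.update_self, Fin.mk.injEq] at h1
      have h2 : (γ α' : ℕ) ≡ γ' α' [MOD p α'] := Nat.ModEq.add_right_cancel' 1 h1
      exact Fin.ext (h2.eq_of_lt_of_lt (γ α').is_lt (γ' α').is_lt)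
    · have h1 := congrFun h α'
      simpa [Function.update_of_ne hα] using h1
  · simp
  · intro γ _
    exact char_step_ne_one (hdvd α) (dig_lt hp _ _ _) (dig_lt hp _ _ _) hne
  · intro γ _
    simp only [RFun_update p m lam hdvd]
    rw [← AddChar.map_add_eq_mul]
    congr 1
    ring

/-! ### Complementarity of the one-dimensional sequences -/

/-- The index pairs `(r, r')` below `N` at distance `r' - r = δ`; the shift `δ` may be negative. -/
def pairs (N : ℕ) (δ : ℤ) : Finset (ℕ × ℕ) :=
  (range N ×ˢ range N).filter fun z => (z.2 : ℤ) = z.1 + δ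

theorem mem_pairs {N : ℕ} {δ : ℤ} {z : ℕ × ℕ} :
    z ∈ pairs N δ ↔ (z.1 < N ∧ z.2 < N) ∧ (z.2 : ℤ) = z.1 + δ := by
  simp [pairs]

/-- `l` is the last position of the path `π α` before the digits singled out by `E` stop agreeing,
where `E α β` says that the digits at place `(α, β)` agree. -/
def LastAgree {k : ℕ} (m : Fin k → ℕ) (π : Fin k → ℕ → ℕ) (E : Fin k → ℕ → Prop)
    (q : Fin k × ℕ) : Prop :=
  q.2 + 1 < m q.1 - 1 ∧ ¬ E q.1 (π q.1 (q.2 + 1)) ∧ ∀ j ≤ q.2, E q.1 (π q.1 j)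

/-- Two distinct numbers whose digits agree at the beginning of every path first disagree, along
some path, at a later position. -/
theorem exists_lastAgree {k : ℕ} {p m : Fin k → ℕ} {π : Fin k → ℕ → ℕ}
    (hπ : ∀ α, Set.BijOn (π α) (Set.Iio (m α - 1)) (Set.Iio (m α - 1)))
    {r r' : ℕ} (hr : r < ∏ α, p α ^ (m α - 1)) (hr' : r' < ∏ α, p α ^ (m α - 1)) (hne : r ≠ r')
    (h0 : ∀ α, dig p m r α (π α 0) = dig p m r' α (π α 0)) :
    ∃ q, LastAgree m π (fun α β => β < m α - 1 ∧ dig p m r α β = dig p m r' α β) q := by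
  classical
  have h1 : ∃ α β, β < m α - 1 ∧ dig p m r α β ≠ dig p m r' α β := by
    by_contra! h
    exact hne (dig_ext hr hr' h)
  obtain ⟨α, β, hβ, hd⟩ := h1
  obtain ⟨j, hj, rfl⟩ := (hπ α).surjOn (Set.mem_Iio.2 hβ)
  have hex : ∃ j, j < m α - 1 ∧ dig p m r α (π α j) ≠ dig p m r' α (π α j) := ⟨j, hj, hd⟩
  obtain ⟨hs1, hs2⟩ := Nat.find_spec hex
  have hmin := fun i (hi : i < Nat.find hex) => Nat.find_min hex hi
  generalize Nat.find hex = h at hs1 hs2 hmin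
  obtain _ | l := h
  · exact absurd (h0 α) hs2
  · refine ⟨(α, l), hs1, fun h => hs2 h.2, fun i hi => ?_⟩
    have hi : i ≤ l := hi
    refine ⟨(hπ α).mapsTo (Set.mem_Iio.2 (by omega)), ?_⟩
    by_contra hc
    exact hmin i (by omega) ⟨by omega, hc⟩

/-- Cancellation over the pairs which agree at the beginning of every path. The digit just before
the first disagreement along some path is incremented cyclically in both members of the pair: it is
the same digit in both, so their distance is kept, and the phase is multiplied by a nontrivial
root of unity. -/
theorem sum_pairs_eq_zero {k : ℕ} (p m : Fin k → ℕ) (hp : ∀ α, 0 < p α) (hm : ∀ α, 2 ≤ m α)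
    (lam : ℕ) [NeZero lam] (hdvd : ∀ α, p α ∣ lam) (π : Fin k → ℕ → ℕ)
    (hπ : ∀ α, Set.BijOn (π α) (Set.Iio (m α - 1)) (Set.Iio (m α - 1)))
    (c : Fin k → ℕ → ZMod lam) (c' : Fin k → ZMod lam) (t t' γ : ∀ α, Fin (p α))
    (δ : ℤ) (hδ : δ ≠ 0) :
    ∑ z ∈ (pairs (∏ α, p α ^ (m α - 1)) δ).filter
        (fun z => ∀ α, dig p m z.1 α (π α 0) = dig p m z.2 α (π α 0)),
      ZMod.stdAddChar (RFun p m lam π c c' γ t z.1 - RFun p m lam π c c' γ t' z.2) = 0 := by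
  classical
  set N := ∏ α, p α ^ (m α - 1) with hN
  set D := (pairs N δ).filter
    (fun z => ∀ α, dig p m z.1 α (π α 0) = dig p m z.2 α (π α 0)) with hD
  let E : ℕ × ℕ → Fin k → ℕ → Prop :=
    fun z α β => β < m α - 1 ∧ dig p m z.1 α β = dig p m z.2 α β
  have hex : ∀ z ∈ D, ∃ q, LastAgree m π (E z) q := by
    intro z hz
    rw [hD, Finset.mem_filter, mem_pairs] at hz
    obtain ⟨⟨⟨h1, h2⟩, h3⟩, h4⟩ := hz
    refine exists_lastAgree hπ h1 h2 (fun h => hδ ?_) h4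
    rw [h] at h3
    linarith
  rcases D.eq_empty_or_nonempty with hemp | ⟨z0, hz0⟩
  · rw [hemp, Finset.sum_empty]
  have : Nonempty (Fin k × ℕ) := ⟨(hex z0 hz0).choose⟩
  -- the place to increment depends on the agreement pattern only, which the increment preserves
  let sel : (Fin k → ℕ → Prop) → Fin k × ℕ := fun e => Classical.epsilon (LastAgree m π e)
  have hsel : ∀ z ∈ D, LastAgree m π (E z) (sel (E z)) := fun z hz =>
    Classical.epsilon_spec (hex z hz)
  choose sh hsh using fun q : Fin k × ℕ => exists_shift p m hp q.1 (π q.1 q.2)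
  let σ : ℕ × ℕ → ℕ × ℕ := fun z => (sh (sel (E z)) z.1, sh (sel (E z)) z.2)
  have hlt : ∀ z ∈ D, z.1 < N ∧ z.2 < N := fun z hz =>
    (mem_pairs.1 (Finset.mem_filter.1 hz).1).1
  have hd : ∀ z ∈ D, dig p m z.1 (sel (E z)).1 (π (sel (E z)).1 (sel (E z)).2)
      = dig p m z.2 (sel (E z)).1 (π (sel (E z)).1 (sel (E z)).2) := fun z hz =>
    ((hsel z hz).2.2 _ le_rfl).2
  have shinj : ∀ q : Fin k × ℕ, ∀ r < N, ∀ r' < N, sh q r = sh q r' → r = r' := by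
    intro q r hr r' hr' h
    refine dig_ext hr hr' fun α β hβ => ?_
    have h1 := (hsh q r).2 α β hβ
    rw [h, (hsh q r').2 α β hβ] at h1
    split_ifs at h1 with hc
    · obtain ⟨rfl, rfl⟩ := hc
      have h2 : dig p m r' q.1 (π q.1 q.2) ≡ dig p m r q.1 (π q.1 q.2) [MOD p q.1] :=
        Nat.ModEq.add_right_cancel' 1 h1
      exact (h2.eq_of_lt_of_lt (dig_lt hp _ _ _) (dig_lt hp _ _ _)).symm
    · exact h1.symm
  have hEσ : ∀ z ∈ D, E (σ z) = E z := by
    intro z hz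
    funext α β
    refine propext (and_congr_right fun hβ => ?_)
    simp only [σ]
    rw [(hsh _ z.1).2 α β hβ, (hsh _ z.2).2 α β hβ]
    split_ifs with hc
    · obtain ⟨rfl, rfl⟩ := hc
      simp only [hd z hz]
    · rfl
  refine sum_eq_zero_of_twist D _ (fun z => ZMod.stdAddChar
      (((lam / p (sel (E z)).1 : ℕ) : ZMod lam) *
        ((dig p m z.1 (sel (E z)).1 (π (sel (E z)).1 ((sel (E z)).2 + 1)) : ZMod lam) -
          (dig p m z.2 (sel (E z)).1 (π (sel (E z)).1 ((sel (E z)).2 + 1)) : ZMod lam))))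
      σ ?_ ?_ ?_ ?_ ?_
  · intro z hz
    have hE := hEσ z hz
    have hz' := hz
    rw [hD, Finset.mem_filter, mem_pairs] at hz' ⊢
    obtain ⟨⟨⟨h1, h2⟩, h3⟩, h4⟩ := hz'
    refine ⟨⟨⟨(hsh _ _).1, (hsh _ _).1⟩, ?_⟩, fun α => ?_⟩
    · have := sub_eq_of_dig (p := p) (m := m) h1 h2 (hsh (sel (E z)) z.1).1
        (hsh (sel (E z)) z.2).1 fun α β hβ => by
          rw [(hsh _ z.1).2 α β hβ, (hsh _ z.2).2 α β hβ]
          split_ifs with hc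
          · obtain ⟨rfl, rfl⟩ := hc
            simp only [hd z hz, sub_self]
          · rfl
      simp only [σ]
      linarith
    · have h5 : E z α (π α 0) :=
        ⟨(hπ α).mapsTo (Set.mem_Iio.2 (by have := hm α; omega)), h4 α⟩
      rw [← hE] at h5
      exact h5.2
  · intro z hz w hw h
    have hEE : E z = E w := by rw [← hEσ z hz, ← hEσ w hw, h]
    have h1 := congrArg Prod.fst h
    have h2 := congrArg Prod.snd h
    simp only [σ] at h1 h2
    rw [hEE] at h1 h2
    exact Prod.ext (shinj _ _ (hlt z hz).1 _ (hlt w hw).1 h1)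
      (shinj _ _ (hlt z hz).2 _ (hlt w hw).2 h2)
  · intro z hz
    obtain ⟨hl1, -, -⟩ := hsel z hz
    simp only [hEσ z hz]
    simp only [σ]
    generalize sel (E z) = q at *
    have hb : π q.1 (q.2 + 1) < m q.1 - 1 := (hπ q.1).mapsTo (Set.mem_Iio.2 hl1)
    have hne : ¬ (q.1 = q.1 ∧ π q.1 (q.2 + 1) = π q.1 q.2) := fun h => by
      have := (hπ q.1).injOn (Set.mem_Iio.2 hl1) (Set.mem_Iio.2 (by omega)) h.2
      omega
    rw [(hsh q z.1).2 _ _ hb, (hsh q z.2).2 _ _ hb, if_neg hne, if_neg hne]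
  · intro z hz
    obtain ⟨hl1, hl2, -⟩ := hsel z hz
    refine char_step_ne_one (hdvd _) (dig_lt hp _ _ _) (dig_lt hp _ _ _) fun h => hl2 ⟨?_, h⟩
    exact (hπ _).mapsTo (Set.mem_Iio.2 hl1)
  · intro z hz
    have hdz := hd z hz
    obtain ⟨hl1, -, hl3⟩ := hsel z hz
    simp only [σ]
    generalize sel (E z) = q at *
    obtain ⟨α, l⟩ := q
    simp only at *
    have hb : π α l < m α - 1 := (hπ α).mapsTo (Set.mem_Iio.2 (by omega))
    rw [← AddChar.map_add_eq_mul]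
    congr 1
    rw [RFun_eq_sum_blk, RFun_eq_sum_blk, RFun_eq_sum_blk, RFun_eq_sum_blk,
      ← sub_eq_iff_eq_add, ← Finset.sum_sub_distrib, ← Finset.sum_sub_distrib,
      ← Finset.sum_sub_distrib, Finset.sum_eq_single α]
    · have hs := blk_step ((lam / p α : ℕ) : ZMod lam) (m α) (π α) (hπ α) (c α)
        (fun β => (dig p m z.1 α β : ZMod lam)) (fun β => (dig p m z.2 α β : ZMod lam))
        (fun β => (dig p m (sh (α, l) z.1) α β : ZMod lam))
        (fun β => (dig p m (sh (α, l) z.2) α β : ZMod lam))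
        ((t α : ℕ) : ZMod lam) ((t' α : ℕ) : ZMod lam) ((γ α : ℕ) : ZMod lam) l hl1
        (fun j hj => by rw [(hl3 j hj).2])
        (fun β hβ hne => by rw [(hsh (α, l) z.1).2 α β hβ, if_neg fun h => hne h.2])
        (fun β hβ hne => by rw [(hsh (α, l) z.2).2 α β hβ, if_neg fun h => hne h.2])
        (by rw [(hsh (α, l) z.1).2 α _ hb, (hsh (α, l) z.2).2 α _ hb, hdz])
        (by
          rw [(hsh (α, l) z.1).2 α _ hb, if_pos ⟨rfl, rfl⟩, step_mul_mod (hdvd α)]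
          push_cast
          rfl)
      linear_combination hs
    · intro α' _ hα'
      have hdig : ∀ r, ∀ β < m α' - 1,
          (dig p m (sh (α, l) r) α' β : ZMod lam) = dig p m r α' β := fun r β hβ => by
        rw [(hsh (α, l) r).2 α' β hβ, if_neg fun h => hα' h.1]
      rw [blk_congr (hm α') (hπ α') (hdig z.1), blk_congr (hm α') (hπ α') (hdig z.2), sub_self]
    · simp

/-- Complementarity: for any two offsets `t, t'`, the sequences of `RFun` have zero summed
cross-correlation at every nonzero shift. -/
theorem sum_ccf_eq_zero {k : ℕ} (p m : Fin k → ℕ) (hp : ∀ α, 0 < p α) (hm : ∀ α, 2 ≤ m α)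
    (lam : ℕ) [NeZero lam] (hdvd : ∀ α, p α ∣ lam) (π : Fin k → ℕ → ℕ)
    (hπ : ∀ α, Set.BijOn (π α) (Set.Iio (m α - 1)) (Set.Iio (m α - 1)))
    (c : Fin k → ℕ → ZMod lam) (c' : Fin k → ZMod lam) (t t' : ∀ α, Fin (p α))
    (δ : ℤ) (hδ : δ ≠ 0) :
    ∑ γ : ∀ α, Fin (p α), ∑ z ∈ pairs (∏ α, p α ^ (m α - 1)) δ,
      ZMod.stdAddChar (RFun p m lam π c c' γ t z.1 - RFun p m lam π c c' γ t' z.2) = 0 := by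
  classical
  simp_rw [← Finset.sum_filter_add_sum_filter_not (pairs (∏ α, p α ^ (m α - 1)) δ)
    (fun z => ∀ α, dig p m z.1 α (π α 0) = dig p m z.2 α (π α 0))]
  simp_rw [sum_pairs_eq_zero p m hp hm lam hdvd π hπ c c' t t' _ δ hδ, zero_add]
  rw [Finset.sum_comm]
  refine Finset.sum_eq_zero fun z hz => ?_
  rw [Finset.mem_filter] at hz
  obtain ⟨-, hz⟩ := hz
  push Not at hz
  obtain ⟨α, hα⟩ := hz
  exact sum_gamma_eq_zero p m hp lam hdvd π c c' t t' z.1 z.2 α hα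

/-! ### Correlation sums over pairs -/

theorem sum_pairs_zero (N : ℕ) (f : ℕ → ℕ → ℂ) :
    ∑ z ∈ pairs N 0, f z.1 z.2 = ∑ r ∈ range N, f r r := by
  symm
  refine Finset.sum_bij (fun r _ => (r, r)) ?_ ?_ ?_ ?_
  · intro r hr
    simpa [mem_pairs] using hr
  · intro a _ b _ h
    exact congrArg Prod.fst h
  · rintro ⟨a, b⟩ hz
    obtain ⟨⟨h1, h2⟩, h3⟩ := mem_pairs.1 hz
    have : a = b := by simp only at h3; omega
    exact ⟨a, Finset.mem_range.2 h1, by simp [this]⟩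
  · intros; rfl

theorem sum_pairs_nonneg {L : ℕ} {τ : ℤ} (hτ : 0 ≤ τ) (f : ℕ → ℕ → ℂ) :
    ∑ i ∈ range (L - τ.toNat), f i (i + τ.toNat) = ∑ z ∈ pairs L τ, f z.1 z.2 := by
  refine Finset.sum_bij (fun r _ => (r, r + τ.toNat)) ?_ ?_ ?_ ?_
  · intro r hr
    rw [Finset.mem_range] at hr
    rw [mem_pairs]
    simp only
    omega
  · intro a _ b _ h
    exact congrArg Prod.fst h
  · rintro ⟨a, b⟩ hz
    rw [mem_pairs] at hz
    simp only at hz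
    exact ⟨a, Finset.mem_range.2 (by omega), Prod.ext rfl (by simp only; omega)⟩
  · intros; rfl

theorem sum_pairs_neg {L : ℕ} {τ : ℤ} (hτ : τ < 0) (f : ℕ → ℕ → ℂ) :
    ∑ i ∈ range (L - (-τ).toNat), f (i + (-τ).toNat) i = ∑ z ∈ pairs L τ, f z.1 z.2 := by
  refine Finset.sum_bij (fun r _ => (r + (-τ).toNat, r)) ?_ ?_ ?_ ?_
  · intro r hr
    rw [Finset.mem_range] at hr
    rw [mem_pairs]
    simp only
    omega
  · intro a _ b _ h
    exact congrArg Prod.snd h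
  · rintro ⟨a, b⟩ hz
    rw [mem_pairs] at hz
    simp only at hz
    exact ⟨b, Finset.mem_range.2 (by omega), Prod.ext (by simp only; omega) rfl⟩
  · intros; rfl

theorem accf2_eq_sum_pairs (L1 L2 : ℕ) (X Y : ℕ → ℕ → ℂ) (τ1 τ2 : ℤ) :
    accf2 L1 L2 X Y τ1 τ2 = ∑ z ∈ pairs L1 τ1, ∑ w ∈ pairs L2 τ2,
      X z.1 w.1 * (starRingEnd ℂ) (Y z.2 w.2) := by
  unfold accf2
  split_ifs with h1 h2 h2
  · rw [← sum_pairs_nonneg h1 fun i i' => ∑ w ∈ pairs L2 τ2, X i w.1 * (starRingEnd ℂ) (Y i' w.2)]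
    exact Finset.sum_congr rfl fun i _ => sum_pairs_nonneg h2 fun j j' =>
      X i j * (starRingEnd ℂ) (Y (i + τ1.toNat) j')
  · rw [← sum_pairs_nonneg h1 fun i i' => ∑ w ∈ pairs L2 τ2, X i w.1 * (starRingEnd ℂ) (Y i' w.2)]
    exact Finset.sum_congr rfl fun i _ => sum_pairs_neg (not_le.1 h2) fun j j' =>
      X i j * (starRingEnd ℂ) (Y (i + τ1.toNat) j')
  · rw [← sum_pairs_neg (not_le.1 h1)
      fun i i' => ∑ w ∈ pairs L2 τ2, X i w.1 * (starRingEnd ℂ) (Y i' w.2)]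
    exact Finset.sum_congr rfl fun i _ => sum_pairs_nonneg h2 fun j j' =>
      X (i + (-τ1).toNat) j * (starRingEnd ℂ) (Y i j')
  · rw [← sum_pairs_neg (not_le.1 h1)
      fun i i' => ∑ w ∈ pairs L2 τ2, X i w.1 * (starRingEnd ℂ) (Y i' w.2)]
    exact Finset.sum_congr rfl fun i _ => sum_pairs_neg (not_le.1 h2) fun j j' =>
      X (i + (-τ1).toNat) j * (starRingEnd ℂ) (Y i j')

theorem sum_range_mul_eq (M N : ℕ) (f : ℕ → ℂ) :
    ∑ j ∈ range (M * N), f j = ∑ J ∈ range M, ∑ r ∈ range N, f (J * N + r) := by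
  induction M with
  | zero => simp
  | succ M ih => rw [Nat.succ_mul, Finset.sum_range_add, ih, Finset.sum_range_succ]

theorem sum_pairs_eq_ite (N : ℕ) (τ : ℤ) (f : ℕ → ℕ → ℂ) :
    ∑ z ∈ pairs N τ, f z.1 z.2
      = ∑ r ∈ range N, ∑ r' ∈ range N, if (r' : ℤ) = r + τ then f r r' else 0 := by
  rw [pairs, Finset.sum_filter, Finset.sum_product]

/-- Cutting a sequence of length `M * N` into `M` segments of length `N`: the pair of segments
`(J, J')` sees the shift `τ - (J' - J) N`. -/
theorem sum_pairs_mul (M N : ℕ) (τ : ℤ) (f : ℕ → ℕ → ℂ) :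
    ∑ z ∈ pairs (M * N) τ, f z.1 z.2
      = ∑ J ∈ range M, ∑ J' ∈ range M, ∑ z ∈ pairs N (τ - ((J' : ℤ) - J) * N),
          f (J * N + z.1) (J' * N + z.2) := by
  rw [sum_pairs_eq_ite, sum_range_mul_eq]
  refine Finset.sum_congr rfl fun J _ => ?_
  simp_rw [sum_range_mul_eq M N]
  rw [Finset.sum_comm]
  refine Finset.sum_congr rfl fun J' _ => ?_
  rw [sum_pairs_eq_ite N _ fun a b => f (J * N + a) (J' * N + b)]
  refine Finset.sum_congr rfl fun r _ => Finset.sum_congr rfl fun r' _ => ?_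
  refine if_congr ?_ rfl rfl
  push_cast
  constructor <;> intro h <;> linarith

/-! ### The Golay pair and the array -/

/-- `aBool` and `bBool` form a Golay pair. They are, up to constants, the two functions `RFun` of a
single block of `mB` binary digits. -/
theorem golay {lam : ℕ} [NeZero lam] (heven : 2 ∣ lam) (mB : ℕ) (hmB : 1 ≤ mB) (πB : ℕ → ℕ)
    (hπB : Set.BijOn πB (Set.Iio mB) (Set.Iio mB)) (g : ℕ → ZMod lam) (e e' : ZMod lam) (τ : ℤ) :
    ∑ z ∈ pairs (2 ^ mB) τ, (ZMod.stdAddChar (aBool lam mB πB g e z.1 - aBool lam mB πB g e z.2)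
      + ZMod.stdAddChar (bBool lam mB πB g e' z.1 - bBool lam mB πB g e' z.2))
      = if τ = 0 then ((2 ^ (mB + 1) : ℕ) : ℂ) else 0 := by
  split_ifs with hτ
  · subst hτ
    rw [sum_pairs_zero _ fun i i' =>
      (ZMod.stdAddChar (aBool lam mB πB g e i - aBool lam mB πB g e i') : ℂ)
      + ZMod.stdAddChar (bBool lam mB πB g e' i - bBool lam mB πB g e' i')]
    simp
    ring
  have hN : ∏ _α : Fin 1, 2 ^ (mB + 1 - 1) = 2 ^ mB := by simp
  have hdig : ∀ r < 2 ^ mB, ∀ α β,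
      dig (fun _ : Fin 1 => 2) (fun _ => mB + 1) r α β = bit r β := by
    intro r hr α β
    have : (Finset.univ.filter fun α' : Fin 1 => α' < α) = ∅ := by
      ext x; simp [Subsingleton.elim x α]
    simp only [dig, bit, this, Finset.prod_empty, Nat.div_one, Nat.add_sub_cancel,
      Nat.mod_eq_of_lt hr]
  have hR : ∀ (γ : Fin 1 → Fin 2), ∀ r < 2 ^ mB,
      RFun (fun _ : Fin 1 => 2) (fun _ => mB + 1) lam (fun _ => πB) (fun _ => g) (fun _ => 0)
        γ (fun _ => (0 : Fin 2)) r
      = aBool lam mB πB g 0 r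
        + ((lam / 2 : ℕ) : ZMod lam) * (bit r (πB 0) : ZMod lam) * ((γ 0 : ℕ) : ZMod lam) := by
    intro γ r hr
    simp only [RFun, fFun, hdig r hr, aBool]
    have h2 : mB + 1 - 2 = mB - 1 := by omega
    simp [h2]
  have h0 := sum_ccf_eq_zero (fun _ : Fin 1 => 2) (fun _ => mB + 1) (fun _ => two_pos)
    (fun _ => by omega) lam (fun _ => heven) (fun _ => πB) (fun _ => hπB) (fun _ => g)
    (fun _ => 0) (fun _ => (0 : Fin 2)) (fun _ => (0 : Fin 2)) τ hτ
  rw [Fintype.sum_equiv (Equiv.funUnique (Fin 1) (Fin 2)) _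
    (fun u => ∑ z ∈ pairs (2 ^ mB) τ, ZMod.stdAddChar
      ((aBool lam mB πB g 0 z.1 - aBool lam mB πB g 0 z.2) + ((lam / 2 : ℕ) : ZMod lam) *
        ((bit z.1 (πB 0) : ZMod lam) - (bit z.2 (πB 0) : ZMod lam)) * ((u : ℕ) : ZMod lam)))
    ?_, Fin.sum_univ_two, ← Finset.sum_add_distrib] at h0
  · rw [← h0]
    refine Finset.sum_congr rfl fun z _ => ?_
    congr 2
    · simp only [aBool, Fin.val_zero]
      push_cast
      ring
    · simp only [bBool, aBool, Fin.val_one]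
      push_cast
      ring
  · intro γ
    rw [hN]
    refine Finset.sum_congr rfl fun z hz => ?_
    obtain ⟨⟨h1, h2⟩, -⟩ := mem_pairs.1 hz
    rw [hR γ _ h1, hR γ _ h2]
    congr 1
    change _ = _ + _ * _ * ((γ 0 : ℕ) : ZMod lam)
    ring

theorem XArr_mul_conj {k : ℕ} (p m : Fin k → ℕ) (lam : ℕ) [NeZero lam] (π : Fin k → ℕ → ℕ)
    (c : Fin k → ℕ → ZMod lam) (c' : Fin k → ZMod lam)
    (mB : ℕ) (πB : ℕ → ℕ) (g : ℕ → ZMod lam) (e e' : ZMod lam)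
    (s1 s2 t1 t2 γ : ∀ α, Fin (p α)) (i j i' j' : ℕ) :
    XArr p m lam π c c' mB πB g e e' s1 s2 t1 t2 γ i j *
        (starRingEnd ℂ) (XArr p m lam π c c' mB πB g e e' s1 s2 t1 t2 γ i' j')
      = ZMod.stdAddChar (FFun p m lam π c c' mB πB g e e' s1 s2 t1 t2 γ i j
        - FFun p m lam π c c' mB πB g e e' s1 s2 t1 t2 γ i' j') := by
  have h : ∀ i j, XArr p m lam π c c' mB πB g e e' s1 s2 t1 t2 γ i j
      = ZMod.stdAddChar (FFun p m lam π c c' mB πB g e e' s1 s2 t1 t2 γ i j) := by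
    intro i j
    rw [ZMod.stdAddChar_apply, ZMod.toCircle_apply]
    rfl
  rw [h, h, ← AddChar.map_neg_eq_conj, ← AddChar.map_add_eq_mul, sub_eq_add_neg]

theorem prod_pow_pred_mul {k : ℕ} {p m : Fin k → ℕ} (hm : ∀ α, 2 ≤ m α) :
    (∏ α, p α ^ (m α - 1)) * ∏ α, p α = ∏ α, p α ^ m α := by
  rw [← Finset.prod_mul_distrib]
  refine Finset.prod_congr rfl fun α _ => ?_
  rw [← pow_succ, Nat.sub_add_cancel (by have := hm α; omega)]

/-- On the `J`-th segment of length `∏ α, p α ^ (m α - 1)`, `FFun` is the sum of a part independent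
of the column, `RFun`, and a part depending on the segment only. -/
theorem FFun_segment {k : ℕ} (p m : Fin k → ℕ) (hp : ∀ α, 0 < p α) (hm : ∀ α, 2 ≤ m α) (lam : ℕ)
    (π : Fin k → ℕ → ℕ)
    (c : Fin k → ℕ → ZMod lam) (c' : Fin k → ZMod lam)
    (mB : ℕ) (πB : ℕ → ℕ) (g : ℕ → ZMod lam) (e e' : ZMod lam)
    (s1 s2 t1 t2 γ : ∀ α, Fin (p α)) (i J r : ℕ) (hJ : J < 2 * ∏ α, p α)
    (hr : r < ∏ α, p α ^ (m α - 1)) :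
    FFun p m lam π c c' mB πB g e e' s1 s2 t1 t2 γ i (J * (∏ α, p α ^ (m α - 1)) + r)
      = (if J < ∏ α, p α then aBool lam mB πB g e i else bBool lam mB πB g e' i)
        + (RFun p m lam π c c' γ (if J < ∏ α, p α then t1 else t2) r
        + ∑ α, ((lam / p α : ℕ) : ZMod lam) * (odig p (J % ∏ α, p α) α : ZMod lam) *
          (((if J < ∏ α, p α then s1 else s2) α : ℕ) : ZMod lam)) := by
  set N := ∏ α, p α ^ (m α - 1) with hN
  set Q := ∏ α, p α with hQ
  have hNpos : 0 < N := Finset.prod_pos fun α _ => Nat.pow_pos (hp α)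
  have hdivN : (J * N + r) / N = J := by
    rw [mul_comm, Nat.mul_add_div hNpos, Nat.div_eq_of_lt hr, add_zero]
  have hmodN : (J * N + r) % N = r := by
    rw [mul_comm, Nat.mul_add_mod, Nat.mod_eq_of_lt hr]
  have h1 : (J * N + r) / ∏ α, p α ^ m α = J / Q := by
    rw [← prod_pow_pred_mul hm, ← Nat.div_div_eq_div_mul, hdivN]
  have h2 : (J * N + r) % (∏ α, p α ^ m α) / N = J % Q := by
    rw [← prod_pow_pred_mul hm, Nat.mod_mul_right_div_self, hdivN]
  have h3 : (J * N + r) % (∏ α, p α ^ m α) % N = r := by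
    rw [← prod_pow_pred_mul hm, Nat.mod_mod_of_dvd _ (Dvd.intro _ rfl), hmodN]
  unfold FFun aFun
  rw [h1, h2, h3]
  by_cases h : J < Q
  · simp only [if_pos h, Nat.div_eq_of_lt h]
    push_cast
    ring
  · have : J / Q = 1 := Nat.div_eq_of_lt_le (by omega) (by omega)
    simp only [if_neg h, this]
    push_cast
    ring

/-- Theorem 2: `{X^γ : γ ∈ ∏_α Z_{p_α}}` is a 2-D ZCAC of size
`2^{mB} × 2∏_α p_α^{m_α}` with ZCZ `2^{mB} × ∏_α p_α^{m_α-1}`: the summed 2-D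
autocorrelation equals `2^{mB+1}·∏_α p_α^{m_α+1}` at `(0,0)` and vanishes at every
other shift in the zone. -/
theorem zcac_2d (k : ℕ) (p m : Fin k → ℕ) (hp : ∀ α, (p α).Prime) (hm : ∀ α, 2 ≤ m α)
    (lam : ℕ) (hlam : 0 < lam) (heven : 2 ∣ lam) (hdvd : ∀ α, p α ∣ lam)
    (π : Fin k → ℕ → ℕ)
    (hπ : ∀ α, Set.BijOn (π α) (Set.Iio (m α - 1)) (Set.Iio (m α - 1)))
    (c : Fin k → ℕ → ZMod lam) (c' : Fin k → ZMod lam)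
    (mB : ℕ) (hmB : 1 ≤ mB) (πB : ℕ → ℕ)
    (hπB : Set.BijOn πB (Set.Iio mB) (Set.Iio mB))
    (g : ℕ → ZMod lam) (e e' : ZMod lam)
    (s1 s2 t1 t2 : ∀ α, Fin (p α)) (ht : t1 ≠ t2) :
    ∀ τ1 τ2 : ℤ, |τ1| < ((2 ^ mB : ℕ) : ℤ) → |τ2| < ((∏ α, p α ^ (m α - 1) : ℕ) : ℤ) →
      ∑ γ : ∀ α, Fin (p α),
          accf2 (2 ^ mB) (2 * ∏ α, p α ^ (m α))
            (XArr p m lam π c c' mB πB g e e' s1 s2 t1 t2 γ)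
            (XArr p m lam π c c' mB πB g e e' s1 s2 t1 t2 γ) τ1 τ2
        = if τ1 = 0 ∧ τ2 = 0 then ((2 ^ (mB + 1) : ℕ) : ℂ) * ∏ α, (p α : ℂ) ^ (m α + 1)
          else 0 := by
  intro τ1 τ2 _ hτ2
  have : NeZero lam := ⟨hlam.ne'⟩
  have hp' : ∀ α, 0 < p α := fun α => (hp α).pos
  have hL : 2 * ∏ α, p α ^ m α = (2 * ∏ α, p α) * ∏ α, p α ^ (m α - 1) := by
    rw [← prod_pow_pred_mul hm]; ring
  have hNpos : 0 < ∏ α, p α ^ (m α - 1) := Finset.prod_pos fun α _ => Nat.pow_pos (hp' α)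
  have hconst : (∏ α, (p α : ℂ) ^ (m α + 1))
      = ((∏ α, p α : ℕ) : ℂ) * (((∏ α, p α : ℕ) : ℂ) * ((∏ α, p α ^ (m α - 1) : ℕ) : ℂ)) := by
    push_cast
    rw [← Finset.prod_mul_distrib, ← Finset.prod_mul_distrib]
    refine Finset.prod_congr rfl fun α _ => ?_
    have h : m α + 1 = (m α - 1) + 1 + 1 := by have := hm α; omega
    rw [h, pow_succ, pow_succ]
    ring
  have hccf0 : ∀ t : ∀ α, Fin (p α), ∑ γ : ∀ α, Fin (p α),
      ∑ z ∈ pairs (∏ α, p α ^ (m α - 1)) 0,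
        (ZMod.stdAddChar (RFun p m lam π c c' γ t z.1 - RFun p m lam π c c' γ t z.2) : ℂ)
      = ((∏ α, p α : ℕ) : ℂ) * ((∏ α, p α ^ (m α - 1) : ℕ) : ℂ) := by
    intro t
    have h : ∀ γ, ∑ z ∈ pairs (∏ α, p α ^ (m α - 1)) 0,
        (ZMod.stdAddChar (RFun p m lam π c c' γ t z.1 - RFun p m lam π c c' γ t z.2) : ℂ)
        = ((∏ α, p α ^ (m α - 1) : ℕ) : ℂ) := by
      intro γ
      rw [sum_pairs_zero _ fun r r' =>
        (ZMod.stdAddChar (RFun p m lam π c c' γ t r - RFun p m lam π c c' γ t r') : ℂ)]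
      simp
    simp_rw [h]
    simp
  simp_rw [accf2_eq_sum_pairs, XArr_mul_conj, hL]
  generalize hNdef : ∏ α, p α ^ (m α - 1) = N at *
  generalize hQdef : ∏ α, p α = Q at *
  let C : ℕ → ℕ → ZMod lam := fun J i =>
    if J < Q then aBool lam mB πB g e i else bBool lam mB πB g e' i
  have hcell : ∀ (z : ℕ × ℕ), ∀ J ∈ range (2 * Q), ∀ J' ∈ range (2 * Q),
      ∑ γ : ∀ α, Fin (p α), ∑ w ∈ pairs N (τ2 - ((J' : ℤ) - J) * N),
        (ZMod.stdAddChar (FFun p m lam π c c' mB πB g e e' s1 s2 t1 t2 γ z.1 (J * N + w.1)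
          - FFun p m lam π c c' mB πB g e e' s1 s2 t1 t2 γ z.2 (J' * N + w.2)) : ℂ)
      = if J = J' then
          if τ2 = 0 then (ZMod.stdAddChar (C J z.1 - C J z.2) : ℂ) * ((Q : ℂ) * N) else 0
        else 0 := by
    intro z J hJ J' hJ'
    rw [Finset.mem_range] at hJ hJ'
    let T : ℕ → ZMod lam := fun J => ∑ α, ((lam / p α : ℕ) : ZMod lam) *
      (odig p (J % Q) α : ZMod lam) * (((if J < Q then s1 else s2) α : ℕ) : ZMod lam)
    let t : ℕ → ∀ α, Fin (p α) := fun J => if J < Q then t1 else t2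
    have hfac : ∑ γ : ∀ α, Fin (p α), ∑ w ∈ pairs N (τ2 - ((J' : ℤ) - J) * N),
        (ZMod.stdAddChar (FFun p m lam π c c' mB πB g e e' s1 s2 t1 t2 γ z.1 (J * N + w.1)
          - FFun p m lam π c c' mB πB g e e' s1 s2 t1 t2 γ z.2 (J' * N + w.2)) : ℂ)
        = (ZMod.stdAddChar (C J z.1 - C J' z.2 + (T J - T J')) : ℂ) *
          ∑ γ : ∀ α, Fin (p α), ∑ w ∈ pairs N (τ2 - ((J' : ℤ) - J) * N),
            (ZMod.stdAddChar (RFun p m lam π c c' γ (t J) w.1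
              - RFun p m lam π c c' γ (t J') w.2) : ℂ) := by
      simp_rw [Finset.mul_sum]
      refine Finset.sum_congr rfl fun γ _ => Finset.sum_congr rfl fun w hw => ?_
      obtain ⟨⟨h1, h2⟩, -⟩ := mem_pairs.1 hw
      have e1 := FFun_segment p m hp' hm lam π c c' mB πB g e e' s1 s2 t1 t2 γ z.1 J w.1
        (by rwa [hQdef]) (by rwa [hNdef])
      have e2 := FFun_segment p m hp' hm lam π c c' mB πB g e e' s1 s2 t1 t2 γ z.2 J' w.2
        (by rwa [hQdef]) (by rwa [hNdef])
      rw [hNdef, hQdef] at e1 e2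
      rw [e1, e2, ← AddChar.map_add_eq_mul]
      congr 1
      simp only [C, T, t]
      ring
    rw [hfac]
    by_cases hδ : τ2 - ((J' : ℤ) - J) * N = 0
    · -- `|τ2| < N` is a multiple of `N` here, so it vanishes and the segments coincide
      have hdvdN : (N : ℤ) ∣ τ2 := ⟨(J' : ℤ) - J, by linarith⟩
      have hτ : τ2 = 0 := Int.eq_zero_of_abs_lt_dvd hdvdN hτ2
      have hJJ : J = J' := by
        rw [hτ, zero_sub, neg_eq_zero, mul_eq_zero] at hδ
        omega
      subst hJJ
      rw [if_pos rfl, if_pos hτ, hδ, hccf0, sub_self, add_zero]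
    · have h0 := sum_ccf_eq_zero p m hp' hm lam hdvd π hπ c c' (t J) (t J') _ hδ
      rw [hNdef] at h0
      rw [h0, mul_zero]
      split_ifs with hJJ hτ
      · subst hJJ; exact absurd (by rw [hτ]; ring) hδ
      · rfl
      · rfl
  have hsum : ∑ γ : ∀ α, Fin (p α), ∑ z ∈ pairs (2 ^ mB) τ1, ∑ w ∈ pairs (2 * Q * N) τ2,
        (ZMod.stdAddChar (FFun p m lam π c c' mB πB g e e' s1 s2 t1 t2 γ z.1 w.1
          - FFun p m lam π c c' mB πB g e e' s1 s2 t1 t2 γ z.2 w.2) : ℂ)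
      = ∑ z ∈ pairs (2 ^ mB) τ1, ∑ J ∈ range (2 * Q),
          if τ2 = 0 then (ZMod.stdAddChar (C J z.1 - C J z.2) : ℂ) * ((Q : ℂ) * N) else 0 := by
    rw [Finset.sum_comm]
    refine Finset.sum_congr rfl fun z _ => ?_
    have hs := fun γ => sum_pairs_mul (2 * Q) N τ2 fun j j' =>
      (ZMod.stdAddChar (FFun p m lam π c c' mB πB g e e' s1 s2 t1 t2 γ z.1 j
          - FFun p m lam π c c' mB πB g e e' s1 s2 t1 t2 γ z.2 j') : ℂ)
    rw [Finset.sum_congr rfl fun γ _ => hs γ, Finset.sum_comm]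
    refine Finset.sum_congr rfl fun J hJ => ?_
    rw [Finset.sum_comm, Finset.sum_congr rfl fun J' hJ' => hcell z J hJ J' hJ',
      Finset.sum_ite_eq, if_pos hJ]
  rw [hsum, hconst]
  by_cases hτ : τ2 = 0
  · simp only [hτ, if_true, and_true]
    have hrow : ∀ z : ℕ × ℕ, ∑ J ∈ range (2 * Q),
        (ZMod.stdAddChar (C J z.1 - C J z.2) : ℂ) * ((Q : ℂ) * N)
        = (ZMod.stdAddChar (aBool lam mB πB g e z.1 - aBool lam mB πB g e z.2)
          + ZMod.stdAddChar (bBool lam mB πB g e' z.1 - bBool lam mB πB g e' z.2))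
          * ((Q : ℂ) * ((Q : ℂ) * N)) := by
      intro z
      have h1 : ∀ J ∈ range Q, (ZMod.stdAddChar (C J z.1 - C J z.2) : ℂ) * ((Q : ℂ) * N)
          = ZMod.stdAddChar (aBool lam mB πB g e z.1 - aBool lam mB πB g e z.2)
            * ((Q : ℂ) * N) := fun J hJ => by
        simp only [C, if_pos (Finset.mem_range.1 hJ)]
      have h2 : ∀ J ∈ range Q, (ZMod.stdAddChar (C (Q + J) z.1 - C (Q + J) z.2) : ℂ)
            * ((Q : ℂ) * N)
          = ZMod.stdAddChar (bBool lam mB πB g e' z.1 - bBool lam mB πB g e' z.2)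
            * ((Q : ℂ) * N) := fun J _ => by
        simp only [C, if_neg (show ¬ Q + J < Q by omega)]
      rw [two_mul, Finset.sum_range_add, Finset.sum_congr rfl h1, Finset.sum_congr rfl h2,
        Finset.sum_const, Finset.sum_const, Finset.card_range, nsmul_eq_mul, nsmul_eq_mul]
      ring
    simp_rw [hrow]
    rw [← Finset.sum_mul, golay heven mB hmB πB hπB g e e' τ1]
    split_ifs
    · rfl
    · rw [zero_mul]
  · simp [hτ]
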